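/- Let h(n) denote the number of permutations of length n avoiding the patterns 4213, 2413 and 2143. Then h(n) is asymptotically equivalent to (5/18)·√(5/π)·5ⁿ·n^{−3/2}, i.e. h(n)·n^{3/2}/5ⁿ tends to (5/18)·√(5/π) as n → ∞. -/

import Mathlib

open Filter Topology PowerSeries

/-- `σ` contains the pattern `π`. -/
def PatternContains {n k : ℕ} (σ : Equiv.Perm (Fin n)) (π : Fin k → Fin k) : Prop :=
  ∃ f : Fin k → Fin n, StrictMono f ∧ ∀ a b : Fin k, π a < π b ↔ σ (f a) < σ (f b)

/-- `σ` avoids the pattern `π`. -/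
def PatternAvoids {n k : ℕ} (σ : Equiv.Perm (Fin n)) (π : Fin k → Fin k) : Prop :=
  ¬ PatternContains σ π

/-- The pattern 4213 (zero-indexed values). -/
def p4213 : Fin 4 → Fin 4 := ![3, 1, 0, 2]

/-- The pattern 2413 (zero-indexed values). -/
def p2413 : Fin 4 → Fin 4 := ![1, 3, 0, 2]

/-- The pattern 2143 (zero-indexed values). -/
def p2143 : Fin 4 → Fin 4 := ![1, 0, 3, 2]

/-- The pattern 213 (zero-indexed values). -/
def p213 : Fin 3 → Fin 3 := ![1, 0, 2]

/-- `σ` avoids 4213, 2413 and 2143. -/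
def AvoidsH {n : ℕ} (σ : Equiv.Perm (Fin n)) : Prop :=
  PatternAvoids σ p4213 ∧ PatternAvoids σ p2413 ∧ PatternAvoids σ p2143

/-- `σ` avoids 4213 and 2143. -/
def AvoidsD {n : ℕ} (σ : Equiv.Perm (Fin n)) : Prop :=
  PatternAvoids σ p4213 ∧ PatternAvoids σ p2143

/-- An H-gridding of `σ`: a value cutoff `k ∈ {0,…,n}` such that the subsequence of
entries with (1-based) values `> k` is increasing and the subsequence of entries with
values `≤ k` avoids 213. -/
def HGridding {n : ℕ} (σ : Equiv.Perm (Fin n)) (k : ℕ) : Prop :=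
  k ≤ n ∧
  (∀ i j : Fin n, i < j → k < (σ i : ℕ) + 1 → k < (σ j : ℕ) + 1 → σ i < σ j) ∧
  ¬ ∃ f : Fin 3 → Fin n, StrictMono f ∧ (∀ a, (σ (f a) : ℕ) + 1 ≤ k) ∧
      (∀ a b : Fin 3, p213 a < p213 b ↔ σ (f a) < σ (f b))

/-- A G-gridding of `σ`: a pair `(j, k)` with `0 ≤ j, k ≤ n` such that (i) the first `j`
entries have values `≤ k` and are increasing, (ii) the subsequence of entries at
(1-based) positions `> j` with values `> k` is increasing, and (iii) the subsequence of
entries at positions `> j` with values `≤ k` avoids 213. -/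
def GGridding {n : ℕ} (σ : Equiv.Perm (Fin n)) (j k : ℕ) : Prop :=
  j ≤ n ∧ k ≤ n ∧
  (∀ i : Fin n, (i : ℕ) < j → (σ i : ℕ) + 1 ≤ k) ∧
  (∀ i₁ i₂ : Fin n, i₁ < i₂ → (i₂ : ℕ) < j → σ i₁ < σ i₂) ∧
  (∀ i₁ i₂ : Fin n, i₁ < i₂ → j ≤ (i₁ : ℕ) → k < (σ i₁ : ℕ) + 1 → k < (σ i₂ : ℕ) + 1 →
      σ i₁ < σ i₂) ∧
  ¬ ∃ f : Fin 3 → Fin n, StrictMono f ∧ (∀ a, j ≤ ((f a) : ℕ) ∧ (σ (f a) : ℕ) + 1 ≤ k) ∧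
      (∀ a b : Fin 3, p213 a < p213 b ↔ σ (f a) < σ (f b))

/-- The number of permutations of length `n` avoiding 4213, 2413 and 2143. -/
noncomputable def hCount (n : ℕ) : ℕ :=
  Nat.card {σ : Equiv.Perm (Fin n) // AvoidsH σ}

/-- The number of permutations of length `n` avoiding 4213 and 2143. -/
noncomputable def dCount (n : ℕ) : ℕ :=
  Nat.card {σ : Equiv.Perm (Fin n) // AvoidsD σ}

/-- The minimal number of top points over all H-griddings of `σ`. -/
noncomputable def topPts {n : ℕ} (σ : Equiv.Perm (Fin n)) : ℕ :=
  n - sSup {k | HGridding σ k}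

/-- The minimal number of left points over all G-griddings of `σ`. -/
noncomputable def leftPts {n : ℕ} (σ : Equiv.Perm (Fin n)) : ℕ :=
  sInf {j | ∃ k, GGridding σ j k}

open List (range' Sublist)

/-- The list `l` avoids 213. -/
def List.Avoids213 (l : List ℕ) : Prop :=
  ∀ p q r, [p, q, r].Sublist l → q < p → ¬ p < r

/-- In the list `l`, no entry preceding the final entry `r` of an occurrence of 213
exceeds `r`. For lists without repetitions this is avoidance of 4213, 2413 and 2143. -/
def List.AvoidsH (l : List ℕ) : Prop :=
  ∀ x p q r, [x, r].Sublist l → [p, q, r].Sublist l → q < p → p < r → ¬ r < x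

open Classical in
/-- The rearrangements of `lo, …, lo + n - 1` satisfying `P`. -/
noncomputable def arrangements (P : List ℕ → Prop) (lo n : ℕ) : Finset (List ℕ) :=
  {l ∈ (range' lo n).permutations.toFinset | P l}

lemma mem_arrangements {P : List ℕ → Prop} {lo n : ℕ} {l : List ℕ} :
    l ∈ arrangements P lo n ↔ l.Perm (range' lo n) ∧ P l := by
  simp [arrangements, List.mem_permutations]

lemma List.Perm.split_range' {l₁ l₂ : List ℕ} {b N : ℕ} (h : (l₁ ++ l₂).Perm (range' b N))
    (hlt : ∀ x ∈ l₁, ∀ y ∈ l₂, x < y) :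
    l₁.Perm (range' b l₁.length) ∧ l₂.Perm (range' (b + l₁.length) l₂.length) := by
  have hN : N = l₁.length + l₂.length := by simpa using h.length_eq.symm
  subst hN
  have p1 := l₁.mergeSort_perm (· ≤ ·)
  have p2 := l₂.mergeSort_perm (· ≤ ·)
  have hs : (l₁.mergeSort (· ≤ ·) ++ l₂.mergeSort (· ≤ ·)).SortedLE := by
    rw [List.sortedLE_iff_pairwise, List.pairwise_append]
    refine ⟨(List.sortedLE_mergeSort).pairwise, (List.sortedLE_mergeSort).pairwise, ?_⟩
    intro x hx y hy
    exact (hlt x (p1.mem_iff.1 hx) y (p2.mem_iff.1 hy)).le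
  have hr : (range' b (l₁.length + l₂.length)).SortedLE := by
    rw [List.sortedLE_iff_pairwise]
    exact (List.pairwise_lt_range' (s := b)).imp le_of_lt
  have he := ((p1.append p2).trans h).eq_of_sortedLE hs hr
  rw [← List.range'_append_1] at he
  obtain ⟨h1, h2⟩ := List.append_inj he (by simp)
  exact ⟨h1 ▸ p1.symm, h2 ▸ p2.symm⟩

/-- All interleavings of two lists. -/
def shuffles : List ℕ → List ℕ → Finset (List ℕ)
  | [], B => {B}
  | A, [] => {A}
  | a :: A, b :: B =>
    (shuffles A (b :: B)).image (a :: ·) ∪ (shuffles (a :: A) B).image (b :: ·)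
termination_by A B => A.length + B.length

lemma mem_shuffles {k : ℕ} (A B m : List ℕ) (hA : ∀ x ∈ A, x < k) (hB : ∀ x ∈ B, k ≤ x) :
    m ∈ shuffles A B ↔ m.filter (· < k) = A ∧ m.filter (k ≤ ·) = B := by
  have key : ∀ A : List ℕ, (∀ x ∈ A, x < k) → A.filter (k ≤ ·) = [] := by
    intro A hA; simpa using hA
  have key2 : ∀ A : List ℕ, (∀ x ∈ A, k ≤ x) → A.filter (· < k) = [] := by
    intro A hA; simpa using hA
  induction m generalizing A B with
  | nil => 
    cases A <;> cases B <;> simp [shuffles]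
  | cons c m ih =>
    rcases A with _ | ⟨a, A⟩
    · simp only [shuffles, Finset.mem_singleton]
      constructor
      · rintro rfl
        exact ⟨key2 _ hB, by simpa using hB⟩
      · rintro ⟨h1, h2⟩
        rw [← h2]
        symm
        simpa using h1
    · rcases B with _ | ⟨b, B⟩
      · simp only [shuffles, Finset.mem_singleton]
        constructor
        · intro h; rw [h]
          exact ⟨by simpa using hA, key _ hA⟩
        · rintro ⟨h1, h2⟩
          rw [← h1]
          symm
          simpa using h2
      · simp only [List.mem_cons, forall_eq_or_imp] at hA hB
        simp only [shuffles, Finset.mem_union, Finset.mem_image, List.cons.injEq]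
        have f1 : (∃ a_1 ∈ shuffles A (b :: B), a = c ∧ a_1 = m) ↔
          a = c ∧ m ∈ shuffles A (b :: B) := by aesop
        have f2 : (∃ a_1 ∈ shuffles (a :: A) B, b = c ∧ a_1 = m) ↔
          b = c ∧ m ∈ shuffles (a :: A) B := by aesop
        rw [f1, f2, propext (ih A (b :: B) hA.2 (by simpa using hB)),
          propext (ih (a :: A) B (by simpa using hA) hB.2)]
        by_cases hc : c < k
        · simp [hc, Nat.not_le.2 hc]
          grind
        · simp [hc, Nat.not_lt.1 hc]
          grind

lemma card_shuffles {k : ℕ} (A B : List ℕ) (hA : ∀ x ∈ A, x < k) (hB : ∀ x ∈ B, k ≤ x) :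
    (shuffles A B).card = (A.length + B.length).choose A.length := by
  induction A, B using shuffles.induct with
  | case1 B => simp [shuffles]
  | case2 A h => cases A <;> simp [shuffles]
  | case3 a A b B ih1 ih2 =>
    simp only [List.mem_cons, forall_eq_or_imp] at hA hB
    rw [shuffles, Finset.card_union_of_disjoint, Finset.card_image_of_injective _
      (List.cons_injective), Finset.card_image_of_injective _ (List.cons_injective),
      ih1 hA.2 (by simpa using hB), ih2 (by simpa using hA) hB.2]
    · simp only [List.length_cons]
      rw [show A.length + 1 + (B.length + 1) = (A.length + (B.length + 1)) + 1 by omega,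
        Nat.choose_succ_succ]
      congr 2; omega
    · rw [Finset.disjoint_left]
      simp only [Finset.mem_image]
      rintro _ ⟨x, -, rfl⟩ ⟨y, -, h⟩
      simp only [List.cons.injEq] at h
      omega

/-- The interleavings of an arrangement `A` of `lo, …, lo + s - 1` avoiding 213 with
`c, …, c + t - 1` in increasing order, in which the first entry belongs to `A`. -/
noncomputable def mixes (lo s c t : ℕ) : Finset (List ℕ) :=
  (arrangements List.Avoids213 lo s).biUnion fun A => match A with
    | [] => if t = 0 then {[]} else ∅
    | a :: A => (shuffles A (range' c t)).image (a :: ·)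

lemma mem_mixes {lo s c t : ℕ} (h : lo + s ≤ c) {m : List ℕ} :
    m ∈ mixes lo s c t ↔ m.filter (· < c) ∈ arrangements List.Avoids213 lo s ∧
      m.filter (c ≤ ·) = range' c t ∧ ∀ x ∈ m.head?, x < c := by
  have hlt : ∀ A ∈ arrangements List.Avoids213 lo s, ∀ x ∈ A, x < c := by
    intro A hA x hx
    have := (mem_arrangements.1 hA).1.mem_iff.1 hx
    simp at this; omega
  have hge : ∀ x ∈ range' c t, c ≤ x := by simp; omega
  simp only [mixes, Finset.mem_biUnion]
  constructor
  · rintro ⟨A, hA, hm⟩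
    rcases A with _ | ⟨a, A⟩
    · by_cases ht : t = 0
      · simp only [ht, if_true, Finset.mem_singleton] at hm
        subst hm; simpa [ht] using hA
      · simp [ht] at hm
    · simp only [Finset.mem_image] at hm
      obtain ⟨m, hm, rfl⟩ := hm
      have hAlt := hlt _ hA
      simp only [List.mem_cons, forall_eq_or_imp] at hAlt
      rw [mem_shuffles A _ m hAlt.2 hge] at hm
      simp [hAlt.1, hm.1, hm.2, hA]
  · rintro ⟨h1, h2, h3⟩
    refine ⟨_, h1, ?_⟩
    rcases m with _ | ⟨a, m⟩
    · have ht : t = 0 := by simpa using h2.symm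
      simp [ht]
    · have ha : a < c := by simpa using h3
      have hAlt := hlt _ h1
      simp only [List.filter_cons, ha, decide_true, if_true] at hAlt ⊢
      simp only [List.mem_cons, forall_eq_or_imp] at hAlt
      rw [Finset.mem_image]
      refine ⟨m, ?_, rfl⟩
      rw [mem_shuffles _ _ m hAlt.2 hge]
      simpa [List.filter_cons, ha] using h2

/-- The number of interleavings of `s` given and `t` further letters in which the first letter
is one of the `s` given ones. -/
def mixNum : ℕ → ℕ → ℕ
  | 0, 0 => 1
  | 0, _ + 1 => 0
  | s + 1, t => (s + t).choose s

lemma card_mixes {lo s c : ℕ} (t : ℕ) (h : lo + s ≤ c) :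
    (mixes lo s c t).card = (arrangements List.Avoids213 lo s).card * mixNum s t := by
  have hlt : ∀ A ∈ arrangements List.Avoids213 lo s, ∀ x ∈ A, x < c := by
    intro A hA x hx
    have := (mem_arrangements.1 hA).1.mem_iff.1 hx
    simp at this; omega
  have hge : ∀ x ∈ range' c t, c ≤ x := by simp; omega
  rw [mixes, Finset.card_biUnion, Finset.sum_const_nat]
  · intro A hA
    have hl : A.length = s := by simpa using (mem_arrangements.1 hA).1.length_eq
    rcases A with _ | ⟨a, A⟩
    · simp only [List.length_nil] at hl
      subst hl
      cases t <;> simp [mixNum]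
    · have hAlt := hlt _ hA
      simp only [List.mem_cons, forall_eq_or_imp] at hAlt
      simp only
      rw [Finset.card_image_of_injective _ List.cons_injective, card_shuffles A _ hAlt.2 hge]
      simp only [List.length_cons] at hl
      subst hl
      simp [mixNum]
  · intro A hA B hB hAB
    have hAlt := hlt _ hA
    have hBlt := hlt _ hB
    rw [Function.onFun, Finset.disjoint_left]
    intro m hmA hmB
    apply hAB
    rcases A with _ | ⟨a, A⟩ <;> rcases B with _ | ⟨b, B⟩
    · rfl
    · have := (mem_arrangements.1 hA).1.length_eq.trans (mem_arrangements.1 hB).1.length_eq.symm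
      simp at this
    · have := (mem_arrangements.1 hA).1.length_eq.trans (mem_arrangements.1 hB).1.length_eq.symm
      simp at this
    · simp only [Finset.mem_image] at hmA hmB
      obtain ⟨m, hm, rfl⟩ := hmA
      obtain ⟨m', hm', he⟩ := hmB
      simp only [List.cons.injEq] at he
      obtain ⟨rfl, rfl⟩ := he
      simp only [List.mem_cons, forall_eq_or_imp] at hAlt hBlt
      rw [mem_shuffles _ _ _ hAlt.2 hge] at hm
      rw [mem_shuffles _ _ _ hBlt.2 hge] at hm'
      rw [← hm.1, ← hm'.1]

lemma List.Perm.split_range'_blocks {S L T : List ℕ} {a lo N : ℕ}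
    (h : (S ++ a :: (L ++ T)).Perm (range' lo N)) (hS : ∀ x ∈ S, x < a) (hL : ∀ x ∈ L, a < x)
    (hT : ∀ x ∈ T, a < x) (hLT : ∀ x ∈ L, ∀ y ∈ T, x < y) :
    a = lo + S.length ∧ S.Perm (range' lo S.length) ∧
      L.Perm (range' (lo + S.length + 1) L.length) ∧
      T.Perm (range' (lo + S.length + 1 + L.length) T.length) := by
  obtain ⟨h1, h2⟩ := h.split_range' (by
    intro x hx y hy
    simp only [List.mem_cons, List.mem_append] at hy
    rcases hy with rfl | hy | hy
    · exact hS x hx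
    · exact (hS x hx).trans (hL y hy)
    · exact (hS x hx).trans (hT y hy))
  obtain ⟨h3, h4⟩ := (show ([a] ++ (L ++ T)).Perm _ from h2).split_range' (by
    intro x hx y hy
    simp only [List.mem_singleton, List.mem_append] at hx hy
    subst hx
    exact hy.elim (hL y) (hT y))
  obtain ⟨h5, h6⟩ := h4.split_range' hLT
  exact ⟨by simpa using h3.mem_iff (a := a), h1, h5, h6⟩

lemma List.takeWhile_append_of_head {α : Type*} {p : α → Bool} {l m : List α}
    (hl : ∀ x ∈ l, p x) (hm : ∀ x ∈ m.head?, ¬ p x) : (l ++ m).takeWhile p = l := by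
  rw [List.takeWhile_append_of_pos hl]
  rcases m with _ | ⟨b, m⟩
  · simp
  · have : ¬ p b := hm b (by simp)
    simp [this]

lemma List.exists_append_of_cons {a : ℕ} {r : List ℕ} (h : (a :: r).Nodup) :
    ∃ L m : List ℕ, r = L ++ m ∧ (∀ x ∈ L, a < x) ∧ ∀ x ∈ m.head?, x < a := by
  refine ⟨r.takeWhile (a < ·), r.dropWhile (a < ·), List.takeWhile_append_dropWhile.symm, ?_, ?_⟩
  · intro x hx
    simpa using List.mem_takeWhile_imp hx
  · intro x hx
    have h1 := List.head?_dropWhile_not (fun x => decide (a < x)) r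
    have h2 : x ∈ r := List.dropWhile_sublist _ |>.subset (List.mem_of_mem_head? hx)
    rw [Option.mem_def] at hx
    rw [hx] at h1
    simp only [decide_eq_false_iff_not, not_lt] at h1
    have : x ≠ a := by rintro rfl; simp [h2] at h
    omega

lemma arrangements_zero {P : List ℕ → Prop} (lo : ℕ) (h : P []) : arrangements P lo 0 = {[]} := by
  ext l
  simp only [mem_arrangements, List.range'_zero, List.perm_nil, Finset.mem_singleton]
  exact ⟨fun h => h.1, fun e => ⟨e, e ▸ h⟩⟩

lemma mem_of_mem_arrangements {P : List ℕ → Prop} {lo n : ℕ} {l : List ℕ}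
    (h : l ∈ arrangements P lo n) {x : ℕ} (hx : x ∈ l) : lo ≤ x ∧ x < lo + n := by
  simpa using (mem_arrangements.1 h).1.mem_iff.1 hx

lemma length_of_mem_arrangements {P : List ℕ → Prop} {lo n : ℕ} {l : List ℕ}
    (h : l ∈ arrangements P lo n) : l.length = n := by
  simpa using (mem_arrangements.1 h).1.length_eq

lemma range'_blocks_perm (lo s i t : ℕ) :
    (range' lo s ++ (lo + s) :: (range' (lo + s + 1) i ++ range' (lo + s + 1 + i) t)).Perm
      (range' lo (i + (s + t) + 1)) := by
  rw [List.range'_append_1, ← List.range'_succ, List.range'_append_1]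
  rw [show s + (i + t + 1) = i + (s + t) + 1 by omega]

lemma avoids213_cons_append {a : ℕ} {L S : List ℕ} (hL : L.Avoids213) (hS : S.Avoids213)
    (haL : ∀ x ∈ L, a < x) (haS : ∀ x ∈ S, x < a) : (a :: (L ++ S)).Avoids213 := by
  have key : ∀ p q r, [p, q, r].Sublist (L ++ S) → q < p → ¬ p < r := by
    intro p q r h hqp hpr
    by_cases hp : a < p
    · have h1 : ([p, q, r].filter (a < ·)).Sublist ((L ++ S).filter (a < ·)) := h.filter _
      have e1 : L.filter (a < ·) = L := by simpa using haL
      have e2 : S.filter (a < ·) = [] := by simpa using fun x hx => (haS x hx).le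
      have hr : a < r := hp.trans hpr
      rw [List.filter_append, e1, e2, List.append_nil] at h1
      by_cases hq : a < q
      · simp only [List.filter_cons, hp, hq, hr, decide_true, if_true, List.filter_nil] at h1
        exact hL p q r h1 hqp hpr
      · have h2 : [q, r].Sublist (L ++ S) := (List.sublist_cons_self p [q, r]).trans h
        rw [List.sublist_append_iff] at h2
        obtain ⟨u, v, huv, hu, hv⟩ := h2
        rcases u with _ | ⟨u, u'⟩
        · simp only [List.nil_append] at huv
          subst huv
          have := haS r (hv.subset (by simp))
          omega
        · simp only [List.cons_append, List.cons.injEq] at huv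
          have := haL q (hu.subset (by simp [huv.1]))
          omega
    · have hp' : p ∈ L ++ S := h.subset (by simp)
      have hpS : p ∈ S := by
        rcases List.mem_append.1 hp' with h | h
        · exact absurd (haL p h) hp
        · exact h
      have hpa := haS p hpS
      rw [List.sublist_append_iff] at h
      obtain ⟨u, v, huv, hu, hv⟩ := h
      rcases u with _ | ⟨u, u'⟩
      · simp only [List.nil_append] at huv
        subst huv
        exact hS p q r hv hqp hpr
      · simp only [List.cons_append, List.cons.injEq] at huv
        have := haL p (hu.subset (by simp [huv.1]))
        omega
  intro p q r h hqp hpr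
  rw [List.cons_sublist_cons'] at h
  rcases h with h | ⟨rfl, h⟩
  · exact key p q r h hqp hpr
  · rw [List.sublist_append_iff] at h
    obtain ⟨u, v, huv, hu, hv⟩ := h
    rcases u with _ | ⟨u, u'⟩
    · simp only [List.nil_append] at huv
      subst huv
      have := haS r (hv.subset (by simp))
      omega
    · simp only [List.cons_append, List.cons.injEq] at huv
      have := haL q (hu.subset (by simp [huv.1]))
      omega

theorem card_arrangements_avoids213 (lo n : ℕ) :
    (arrangements List.Avoids213 lo n).card = catalan n := by
  induction n using Nat.strong_induction_on generalizing lo with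
  | _ n ih =>
  rcases n with _ | n
  · rw [arrangements_zero _ (by intro p q r h; simp at h)]; simp
  rw [catalan_succ']
  let X : Finset (Σ _ : ℕ × ℕ, List ℕ × List ℕ) :=
    (Finset.HasAntidiagonal.antidiagonal n).sigma fun k =>
      arrangements List.Avoids213 (lo + k.2 + 1) k.1 ×ˢ arrangements List.Avoids213 lo k.2
  have hX : X.card = ∑ ij ∈ Finset.HasAntidiagonal.antidiagonal n, catalan ij.1 * catalan ij.2 := by
    rw [Finset.card_sigma]
    refine Finset.sum_congr rfl fun k hk => ?_
    rw [Finset.HasAntidiagonal.mem_antidiagonal] at hk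
    rw [Finset.card_product, ih _ (by omega), ih _ (by omega)]
  rw [← hX]
  symm
  refine Finset.card_bij (fun x _ => (lo + x.1.2) :: (x.2.1 ++ x.2.2)) ?_ ?_ ?_
  · rintro ⟨⟨i, s⟩, L, S⟩ hx
    simp only [X, Finset.mem_sigma, Finset.HasAntidiagonal.mem_antidiagonal, Finset.mem_product] at hx
    obtain ⟨hn, hL, hS⟩ := hx
    refine mem_arrangements.2 ⟨?_, avoids213_cons_append (mem_arrangements.1 hL).2
      (mem_arrangements.1 hS).2 ?_ ?_⟩
    · have := range'_blocks_perm lo s i 0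
      simp only [List.range'_zero, List.append_nil, Nat.add_zero, hn] at this
      refine List.Perm.trans ?_ this
      refine List.Perm.trans ?_ ((mem_arrangements.1 hS).1.append
        ((mem_arrangements.1 hL).1.cons (lo + s)))
      refine List.Perm.trans (List.Perm.cons _ List.perm_append_comm) ?_
      exact List.perm_middle.symm
    · intro x hx
      change lo + s < x
      have := mem_of_mem_arrangements hL hx
      omega
    · intro x hx; exact (mem_of_mem_arrangements hS hx).2
  · rintro ⟨⟨i, s⟩, L, S⟩ hx ⟨⟨i', s'⟩, L', S'⟩ hx' he
    simp only [X, Finset.mem_sigma, Finset.HasAntidiagonal.mem_antidiagonal,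
      Finset.mem_product] at hx hx'
    obtain ⟨hn, hL, hS⟩ := hx
    obtain ⟨hn', hL', hS'⟩ := hx'
    simp only [List.cons.injEq, Nat.add_left_cancel_iff] at he
    obtain ⟨rfl, he⟩ := he
    have hi : i = i' := by omega
    subst hi
    obtain ⟨rfl, rfl⟩ := List.append_inj he (by
      rw [length_of_mem_arrangements hL, length_of_mem_arrangements hL'])
    rfl
  · intro l hl
    obtain ⟨hp, hav⟩ := mem_arrangements.1 hl
    rcases l with _ | ⟨a, r⟩
    · simp at hp
    have hnd : (a :: r).Nodup := hp.nodup_iff.2 List.nodup_range'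
    obtain ⟨L, S, rfl, hL, hS⟩ := List.exists_append_of_cons hnd
    have hS' : ∀ x ∈ S, x < a := by
      rcases S with _ | ⟨b, S⟩
      · simp
      · have hb : b < a := hS b (by simp)
        intro x hx
        rcases List.mem_cons.1 hx with rfl | hx
        · exact hb
        · have h1 : [a, b, x].Sublist (a :: (L ++ b :: S)) := by
            refine List.Sublist.cons_cons _ (List.Sublist.trans ?_ (List.sublist_append_right _ _))
            exact List.Sublist.cons_cons _ (List.singleton_sublist.2 hx)
          have h2 := hav a b x h1 hb
          have : x ≠ a := by rintro rfl; simp [hx] at hnd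
          omega
    have hp' : (S ++ a :: (L ++ [])).Perm (range' lo (n + 1)) := by
      refine List.Perm.trans ?_ hp
      refine List.perm_middle.trans (List.Perm.cons _ ?_)
      simpa using List.perm_append_comm
    obtain ⟨h1, h2, h3, -⟩ := hp'.split_range'_blocks hS' hL (by simp) (by simp)
    have hlen := hp.length_eq
    simp only [List.length_cons, List.length_append, List.length_range'] at hlen
    refine ⟨⟨(L.length, S.length), L, S⟩, ?_, by simp [h1]⟩
    simp only [X, Finset.mem_sigma, Finset.HasAntidiagonal.mem_antidiagonal, Finset.mem_product]
    refine ⟨by omega, mem_arrangements.2 ⟨h3, ?_⟩, mem_arrangements.2 ⟨h2, ?_⟩⟩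
    · intro p q r h
      exact hav p q r (h.trans ((List.sublist_append_left _ _).trans (List.sublist_cons_self _ _)))
    · intro p q r h
      exact hav p q r (h.trans ((List.sublist_append_right _ _).trans (List.sublist_cons_self _ _)))

lemma List.filter_lt_append_filter_gt_perm {a : ℕ} {m : List ℕ} (h : a ∉ m) :
    (m.filter (· < a) ++ m.filter (a < ·)).Perm m := by
  have e : m.filter (a < ·) = m.filter (fun x => !decide (x < a)) := by
    refine List.filter_congr fun x hx => ?_
    have : x ≠ a := by rintro rfl; exact h hx
    simp only [← decide_not, decide_eq_decide]
    omega
  rw [e]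
  exact List.filter_append_perm _ _

lemma avoidsH_cons_append {a c : ℕ} {L m : List ℕ} (hac : a < c) (hL : L.AvoidsH)
    (hS : (m.filter (· < c)).Avoids213) (hT : (m.filter (c ≤ ·)).Pairwise (· < ·))
    (haL : ∀ x ∈ L, a < x ∧ x < c) (ham : ∀ x ∈ m, x < a ∨ c ≤ x) :
    (a :: (L ++ m)).AvoidsH := by
  have hmem : ∀ x y : ℕ, [x, y].Sublist (a :: (L ++ m)) → y ∈ L →
      x = a ∨ [x, y].Sublist L := by
    intro x y h hy
    have hy' := haL y hy
    rw [List.cons_sublist_cons'] at h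
    rcases h with h | ⟨rfl, -⟩
    · rw [List.sublist_append_iff] at h
      obtain ⟨u, v, huv, hu, hv⟩ := h
      have hym : y ∉ m := fun hym => by have := ham y hym; omega
      have hyv : y ∉ v := fun h => hym (hv.subset h)
      have hv : v = [] := by
        rcases v.eq_nil_or_concat with rfl | ⟨v, z, rfl⟩
        · rfl
        · have := congrArg List.getLast? huv
          simp at this
          simp [this] at hyv
      right
      rw [huv, hv]
      simpa using hu
    · exact Or.inl rfl
  intro x p q r hx h hqp hpr hrx
  have hr : r ∈ a :: (L ++ m) := hx.subset (by simp)
  have hpq : [p, q].Sublist (a :: (L ++ m)) :=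
    List.Sublist.trans (List.sublist_append_left [p, q] [r]) h
  have hqr : [q, r].Sublist (a :: (L ++ m)) := (List.sublist_cons_self p [q, r]).trans h
  have ha : ∀ y, [y, a].Sublist (a :: (L ++ m)) → False := by
    intro y hy
    have : a ∈ L ++ m := by
      rw [List.cons_sublist_cons'] at hy
      rcases hy with hy | ⟨-, hy⟩
      · exact hy.subset (by simp)
      · exact hy.subset (by simp)
    rcases List.mem_append.1 this with h | h
    · exact lt_irrefl _ (haL a h).1
    · have := ham a h
      omega
  simp only [List.mem_cons, List.mem_append] at hr
  rcases hr with rfl | hr | hr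
  · exact ha x hx
  · have hxL : [x, r].Sublist L := by
      rcases hmem x r hx hr with rfl | h
      · have := haL r hr
        omega
      · exact h
    have hqL : q ∈ L := by
      rcases hmem q r hqr hr with rfl | h
      · exact absurd hpq (ha p)
      · exact h.subset (by simp)
    have hpL : p ∈ L := by
      rcases hmem p q hpq hqL with rfl | h
      · have := haL q hqL
        omega
      · exact h.subset (by simp)
    have hf := h.filter (fun y => decide (a < y ∧ y < c))
    have e1 : L.filter (fun y => decide (a < y ∧ y < c)) = L := by simpa using haL
    have e2 : m.filter (fun y => decide (a < y ∧ y < c)) = [] := by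
      simp only [List.filter_eq_nil_iff, decide_eq_true_eq]
      intro y hy
      have := ham y hy
      omega
    simp only [List.filter_cons, List.filter_append, e1, e2, haL p hpL, haL q hqL, haL r hr,
      and_self, lt_irrefl, false_and, decide_true, decide_false, if_true, List.filter_nil,
      List.append_nil] at hf
    exact hL x p q r hxL (by simpa using hf) hqp hpr hrx
  · rcases ham r hr with hra | hrc
    · have hf := h.filter (fun y => decide (y < a))
      have e1 : L.filter (fun y => decide (y < a)) = [] := by
        simpa using fun x hx => (haL x hx).1.le
      have e2 : m.filter (fun y => decide (y < a)) = m.filter (· < c) := by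
        refine List.filter_congr fun y hy => ?_
        have := ham y hy
        simp only [decide_eq_decide]
        omega
      have hpa : p < a := hpr.trans hra
      have hqa : q < a := hqp.trans hpa
      simp only [List.filter_cons, List.filter_append, e1, e2, hpa, hqa, hra,
        decide_true, if_true, List.filter_nil, List.nil_append] at hf
      exact hS p q r (by simpa using hf) hqp hpr
    · have hf := hx.filter (fun y => decide (c ≤ y))
      have e1 : L.filter (fun y => decide (c ≤ y)) = [] := by
        simpa using fun x hx => (haL x hx).2
      have hxc : c ≤ x := hrc.trans hrx.le
      simp only [List.filter_cons, List.filter_append, e1, hxc, hrc,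
        decide_true, if_true, List.filter_nil, List.nil_append] at hf
      rw [List.pairwise_iff_forall_sublist] at hT
      have : x < r := hT (by simpa [Nat.not_le.2 hac] using hf)
      omega

lemma avoidsH_cons_append_decomp {a : ℕ} {L m : List ℕ} (h : (a :: (L ++ m)).AvoidsH)
    (hnd : (a :: (L ++ m)).Nodup) (hm : ∀ x ∈ m.head?, x < a) :
    L.AvoidsH ∧ (m.filter (· < a)).Avoids213 ∧ (m.filter (a < ·)).Pairwise (· < ·) ∧
      ∀ x ∈ L, ∀ y ∈ m.filter (a < ·), x < y := by
  have hocc : ∀ c ∈ m, a < c → ∃ b < a, [a, b, c].Sublist (a :: (L ++ m)) := by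
    intro c hc hac
    rcases m with _ | ⟨b, m⟩
    · simp at hc
    · have hb : b < a := hm b (by simp)
      refine ⟨b, hb, List.Sublist.cons_cons _ (List.Sublist.trans ?_
        (List.sublist_append_right _ _))⟩
      refine List.Sublist.cons_cons _ (List.singleton_sublist.2 ?_)
      rcases List.mem_cons.1 hc with rfl | hc
      · omega
      · exact hc
  have hbefore : ∀ x c, [x, c].Sublist (L ++ m) → c ∈ m → a < c → x < c := by
    intro x c hx hc hac
    obtain ⟨b, hb, hs⟩ := hocc c hc hac
    have h1 := h x a b c (hx.trans (List.sublist_cons_self _ _)) hs hb hac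
    have h2 : [x, c].Nodup := (hnd.sublist (List.sublist_cons_self _ _)).sublist hx
    simp at h2
    omega
  refine ⟨?_, ?_, ?_, ?_⟩
  · intro x p q r h1 h2
    have hs : L.Sublist (a :: (L ++ m)) :=
      (List.sublist_append_left _ _).trans (List.sublist_cons_self _ _)
    exact h x p q r (h1.trans hs) (h2.trans hs)
  · intro p q r h1 hqp hpr
    have hs : [p, q, r].Sublist (L ++ m) :=
      (h1.trans List.filter_sublist).trans (List.sublist_append_right _ _)
    have hra : r < a := by
      have : r ∈ m.filter (· < a) := h1.subset (by simp)
      simpa using (List.mem_filter.1 this).2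
    refine h a p q r ?_ (hs.trans (List.sublist_cons_self _ _)) hqp hpr hra
    exact List.Sublist.cons_cons _ (List.singleton_sublist.2 (hs.subset (by simp)))
  · rw [List.pairwise_iff_forall_sublist]
    intro x c hx
    have hc : c ∈ m.filter (a < ·) := hx.subset (by simp)
    simp only [List.mem_filter, decide_eq_true_eq] at hc
    exact hbefore x c ((hx.trans List.filter_sublist).trans (List.sublist_append_right _ _))
      hc.1 hc.2
  · intro x hx c hc
    simp only [List.mem_filter, decide_eq_true_eq] at hc
    refine hbefore x c ?_ hc.1 hc.2
    exact (List.singleton_sublist.2 hx).append (List.singleton_sublist.2 hc.1)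

theorem card_arrangements_avoidsH_succ (lo n : ℕ) :
    (arrangements List.AvoidsH lo (n + 1)).card =
      ∑ p ∈ Finset.HasAntidiagonal.antidiagonal n, ∑ q ∈ Finset.HasAntidiagonal.antidiagonal p.2,
        (arrangements List.AvoidsH (lo + q.1 + 1) p.1).card * (catalan q.1 * mixNum q.1 q.2) := by
  let X : Finset (Σ _ : (Σ _ : ℕ × ℕ, ℕ × ℕ), List ℕ × List ℕ) :=
    ((Finset.HasAntidiagonal.antidiagonal n).sigma
      fun p => Finset.HasAntidiagonal.antidiagonal p.2).sigma fun k =>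
        arrangements List.AvoidsH (lo + k.2.1 + 1) k.1.1 ×ˢ
          mixes lo k.2.1 (lo + k.2.1 + 1 + k.1.1) k.2.2
  have hX : X.card = ∑ p ∈ Finset.HasAntidiagonal.antidiagonal n,
      ∑ q ∈ Finset.HasAntidiagonal.antidiagonal p.2,
        (arrangements List.AvoidsH (lo + q.1 + 1) p.1).card * (catalan q.1 * mixNum q.1 q.2) := by
    rw [Finset.card_sigma, Finset.sum_sigma]
    refine Finset.sum_congr rfl fun p _ => Finset.sum_congr rfl fun q _ => ?_
    rw [Finset.card_product, card_mixes _ (by simp only; omega), card_arrangements_avoids213]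
  rw [← hX]
  symm
  refine Finset.card_bij (fun x _ => (lo + x.1.2.1) :: (x.2.1 ++ x.2.2)) ?_ ?_ ?_
  · rintro ⟨⟨⟨i, j⟩, s, t⟩, L, m⟩ hx
    simp only [X, Finset.mem_sigma, Finset.HasAntidiagonal.mem_antidiagonal,
      Finset.mem_product] at hx
    obtain ⟨⟨rfl, rfl⟩, hL, hm⟩ := hx
    rw [mem_mixes (by omega)] at hm
    obtain ⟨hS, hT, -⟩ := hm
    refine mem_arrangements.2 ⟨?_, avoidsH_cons_append (c := lo + s + 1 + i) ?_
      (mem_arrangements.1 hL).2 (mem_arrangements.1 hS).2 ?_ ?_ ?_⟩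
    · refine List.Perm.trans ?_ (range'_blocks_perm lo s i t)
      refine List.Perm.trans ?_ List.perm_middle.symm
      refine List.Perm.cons _ ?_
      have h1 := List.filter_append_perm (fun x => decide (x < lo + s + 1 + i)) m
      simp only [← decide_not, not_lt, hT] at h1
      refine List.Perm.trans (h1.symm.append_left L) ?_
      rw [← List.append_assoc, ← List.append_assoc]
      refine List.Perm.append_right _ (List.perm_append_comm.trans ?_)
      exact (mem_arrangements.1 hS).1.append (mem_arrangements.1 hL).1
    · change lo + s < _
      omega
    · rw [hT]; exact List.pairwise_lt_range'
    · intro x hx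
      change lo + s < x ∧ _
      have := mem_of_mem_arrangements hL hx
      omega
    · intro x hx
      change x < lo + s ∨ _
      by_cases hc : x < lo + s + 1 + i
      · left
        exact (mem_of_mem_arrangements hS (List.mem_filter.2 ⟨hx, by simpa using hc⟩)).2
      · omega
  · rintro ⟨⟨⟨i, j⟩, s, t⟩, L, m⟩ hx ⟨⟨⟨i', j'⟩, s', t'⟩, L', m'⟩ hx' he
    have key : ∀ {i s t : ℕ} {L m : List ℕ}, L ∈ arrangements List.AvoidsH (lo + s + 1) i →
        m ∈ mixes lo s (lo + s + 1 + i) t → (L ++ m).takeWhile (lo + s < ·) = L := by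
      intro i s t L m hL hm
      rw [mem_mixes (by omega)] at hm
      refine List.takeWhile_append_of_head ?_ ?_
      · intro x hx
        have := mem_of_mem_arrangements hL hx
        simp only [decide_eq_true_eq]
        omega
      · intro x hx
        have := mem_of_mem_arrangements hm.1 (x := x)
          (List.mem_filter.2 ⟨List.mem_of_mem_head? hx, by simpa using hm.2.2 x hx⟩)
        simp only [decide_eq_true_eq]
        omega
    simp only [X, Finset.mem_sigma, Finset.HasAntidiagonal.mem_antidiagonal,
      Finset.mem_product] at hx hx'
    obtain ⟨⟨rfl, rfl⟩, hL, hm⟩ := hx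
    obtain ⟨⟨hn, rfl⟩, hL', hm'⟩ := hx'
    simp only [List.cons.injEq, Nat.add_left_cancel_iff] at he
    obtain ⟨rfl, he⟩ := he
    have hLL : L = L' := by rw [← key hL hm, ← key hL' hm', he]
    subst hLL
    have hmm : m = m' := List.append_cancel_left he
    subst hmm
    have hi : i = i' := by
      rw [← length_of_mem_arrangements hL, ← length_of_mem_arrangements hL']
    subst hi
    have ht : t = t' := by omega
    subst ht
    rfl
  · intro l hl
    obtain ⟨hp, hav⟩ := mem_arrangements.1 hl
    rcases l with _ | ⟨a, r⟩
    · simp at hp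
    have hnd : (a :: r).Nodup := hp.nodup_iff.2 List.nodup_range'
    obtain ⟨L, m, rfl, hL, hm⟩ := List.exists_append_of_cons hnd
    obtain ⟨hLav, hSav, hTs, hLT⟩ := avoidsH_cons_append_decomp hav hnd hm
    have ham : a ∉ m := by
      intro h
      simp [h] at hnd
    have hperm := List.filter_lt_append_filter_gt_perm ham
    have hp' : (m.filter (· < a) ++ a :: (L ++ m.filter (a < ·))).Perm (range' lo (n + 1)) := by
      refine List.Perm.trans ?_ hp
      refine List.perm_middle.trans (List.Perm.cons _ ?_)
      refine List.Perm.trans ?_ (hperm.append_left L)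
      rw [← List.append_assoc, ← List.append_assoc]
      exact List.perm_append_comm.append_right _
    obtain ⟨h1, h2, h3, h4⟩ := hp'.split_range'_blocks (by simp) hL (by simp) hLT
    set S := m.filter (· < a) with hSdef
    set T := m.filter (a < ·) with hTdef
    have hlen := hp'.length_eq
    simp only [List.length_cons, List.length_append, List.length_range'] at hlen
    have hTeq : T = range' (lo + S.length + 1 + L.length) T.length := by
      refine h4.eq_of_sortedLE ?_ ?_
      · rw [List.sortedLE_iff_pairwise]; exact hTs.imp le_of_lt
      · rw [List.sortedLE_iff_pairwise]
        exact (List.pairwise_lt_range').imp le_of_lt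
    have hmlt : ∀ x ∈ m, (x < lo + S.length + 1 + L.length ↔ x < a) := by
      intro x hx
      constructor
      · intro hlt
        by_contra hxa
        have hne : x ≠ a := by rintro rfl; exact ham hx
        have hxT : x ∈ T := List.mem_filter.2 ⟨hx, by simp only [decide_eq_true_eq]; omega⟩
        have := h4.mem_iff.1 hxT
        simp at this
        omega
      · omega
    refine ⟨⟨⟨(L.length, S.length + T.length), (S.length, T.length)⟩, L, m⟩, ?_, by simp [h1]⟩
    simp only [X, Finset.mem_sigma, Finset.HasAntidiagonal.mem_antidiagonal, Finset.mem_product]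
    refine ⟨⟨by omega, trivial⟩, mem_arrangements.2 ⟨h3, hLav⟩, ?_⟩
    rw [mem_mixes (by omega)]
    refine ⟨?_, ?_, ?_⟩
    · rw [List.filter_congr (q := (fun x => decide (x < a)))
        (by intro x hx; simpa using hmlt x hx)]
      exact mem_arrangements.2 ⟨h2, hSav⟩
    · rw [← hTeq, hTdef]
      refine List.filter_congr fun x hx => ?_
      have := hmlt x hx
      have hne : x ≠ a := by rintro rfl; exact ham hx
      simp only [decide_eq_decide]
      omega
    · intro x hx
      have := hm x hx
      omega

lemma List.sublist_ofFn_iff {n : ℕ} {f : Fin n → ℕ} {w : List ℕ} :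
    w.Sublist (List.ofFn f) ↔
      ∃ g : Fin w.length → Fin n, StrictMono g ∧ ∀ i, w.get i = f (g i) := by
  rw [List.sublist_iff_exists_fin_orderEmbedding_get_eq]
  have hlen : (List.ofFn f).length = n := by simp
  constructor
  · rintro ⟨g, hg⟩
    refine ⟨fun i => Fin.cast hlen (g i), fun i j hij => g.strictMono hij, fun i => ?_⟩
    rw [hg i]
    simp
    rfl
  · rintro ⟨g, hg, hw⟩
    refine ⟨OrderEmbedding.ofStrictMono (fun i => Fin.cast hlen.symm (g i)) fun i j hij => hg hij,
      fun i => ?_⟩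
    rw [hw i]
    simp
    rfl

lemma List.pair_sublist_ofFn_iff {n : ℕ} {f : Fin n → ℕ} {x y : ℕ} :
    [x, y].Sublist (List.ofFn f) ↔ ∃ i j, i < j ∧ f i = x ∧ f j = y := by
  rw [List.sublist_ofFn_iff]
  constructor
  · rintro ⟨g, hg, h⟩
    exact ⟨g ⟨0, by simp⟩, g ⟨1, by simp⟩, hg (by simp),
      (h ⟨0, by simp⟩).symm, (h ⟨1, by simp⟩).symm⟩
  · rintro ⟨i, j, hij, rfl, rfl⟩
    refine ⟨![i, j], ?_, ?_⟩
    · rw [Fin.strictMono_iff_lt_succ]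
      simp [hij]
    · simp [Fin.forall_fin_succ]

lemma List.triple_sublist_ofFn_iff {n : ℕ} {f : Fin n → ℕ} {x y z : ℕ} :
    [x, y, z].Sublist (List.ofFn f) ↔
      ∃ i j k, i < j ∧ j < k ∧ f i = x ∧ f j = y ∧ f k = z := by
  rw [List.sublist_ofFn_iff]
  constructor
  · rintro ⟨g, hg, h⟩
    exact ⟨g ⟨0, by simp⟩, g ⟨1, by simp⟩, g ⟨2, by simp⟩, hg (by simp),
      hg (by simp [Fin.lt_def]), (h ⟨0, by simp⟩).symm, (h ⟨1, by simp⟩).symm,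
      (h ⟨2, by simp⟩).symm⟩
  · rintro ⟨i, j, k, hij, hjk, rfl, rfl, rfl⟩
    refine ⟨![i, j, k], ?_, ?_⟩
    · rw [Fin.strictMono_iff_lt_succ]
      simp [Fin.forall_fin_succ, hij, hjk]
    · simp [Fin.forall_fin_succ]

lemma avoidsH_iff_forall {n : ℕ} (σ : Equiv.Perm (Fin n)) :
    AvoidsH σ ↔ ∀ x p q r : Fin n, x < r → p < q → q < r → σ q < σ p → σ p < σ r →
      ¬ σ r < σ x := by
  constructor
  · rintro ⟨h1, h2, h3⟩ x p q r hxr hpq hqr hqp hpr hrx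
    rcases lt_trichotomy x p with hxp | rfl | hxp
    · refine h1 ⟨![x, p, q, r], ?_, ?_⟩
      · rw [Fin.strictMono_iff_lt_succ]
        simp [Fin.forall_fin_succ, hxp, hpq, hqr]
      · simp [Fin.forall_fin_succ, p4213]
        omega
    · omega
    rcases lt_trichotomy x q with hxq | rfl | hxq
    · refine h2 ⟨![p, x, q, r], ?_, ?_⟩
      · rw [Fin.strictMono_iff_lt_succ]
        simp [Fin.forall_fin_succ, hxp, hxq, hqr]
      · simp [Fin.forall_fin_succ, p2413]
        omega
    · omega
    · refine h3 ⟨![p, q, x, r], ?_, ?_⟩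
      · rw [Fin.strictMono_iff_lt_succ]
        simp [Fin.forall_fin_succ, hxq, hpq, hxr]
      · simp [Fin.forall_fin_succ, p2143]
        omega
  · intro h
    refine ⟨?_, ?_, ?_⟩
    · rintro ⟨f, hf, hp⟩
      exact h (f 0) (f 1) (f 2) (f 3) (hf (by decide)) (hf (by decide)) (hf (by decide))
        ((hp 2 1).1 (by decide)) ((hp 1 3).1 (by decide)) ((hp 3 0).1 (by decide))
    · rintro ⟨f, hf, hp⟩
      exact h (f 1) (f 0) (f 2) (f 3) (hf (by decide)) (hf (by decide)) (hf (by decide))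
        ((hp 2 0).1 (by decide)) ((hp 0 3).1 (by decide)) ((hp 3 1).1 (by decide))
    · rintro ⟨f, hf, hp⟩
      exact h (f 2) (f 0) (f 1) (f 3) (hf (by decide)) (hf (by decide)) (hf (by decide))
        ((hp 1 0).1 (by decide)) ((hp 0 3).1 (by decide)) ((hp 3 2).1 (by decide))

lemma avoidsH_ofFn_iff {n : ℕ} (σ : Equiv.Perm (Fin n)) :
    (List.ofFn fun i => (σ i : ℕ)).AvoidsH ↔ AvoidsH σ := by
  rw [avoidsH_iff_forall]
  constructor
  · intro h x p q r hxr hpq hqr hqp hpr hrx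
    exact h _ _ _ _ (List.pair_sublist_ofFn_iff.2 ⟨x, r, hxr, rfl, rfl⟩)
      (List.triple_sublist_ofFn_iff.2 ⟨p, q, r, hpq, hqr, rfl, rfl, rfl⟩) hqp hpr hrx
  · intro h x p q r hxr hpqr hqp hpr hrx
    obtain ⟨i, l, hil, rfl, rfl⟩ := List.pair_sublist_ofFn_iff.1 hxr
    obtain ⟨j, k, l', hjk, hkl, rfl, rfl, hl⟩ := List.triple_sublist_ofFn_iff.1 hpqr
    obtain rfl : l' = l := σ.injective (Fin.ext hl)
    exact h i j k l' hil hjk hkl hqp hpr hrx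

theorem hCount_eq_card_arrangements (n : ℕ) :
    hCount n = (arrangements List.AvoidsH 0 n).card := by
  classical
  rw [hCount, Nat.card_eq_fintype_card, Fintype.card_subtype]
  refine Finset.card_bij (fun σ _ => List.ofFn fun i => (σ i : ℕ)) ?_ ?_ ?_
  · intro σ hσ
    rw [Finset.mem_filter] at hσ
    refine mem_arrangements.2 ⟨?_, (avoidsH_ofFn_iff σ).2 hσ.2⟩
    rw [List.perm_ext_iff_of_nodup _ List.nodup_range']
    · intro x
      simp only [List.mem_ofFn, List.mem_range'_1]
      constructor
      · rintro ⟨i, rfl⟩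
        simp
      · rintro ⟨-, hx⟩
        exact ⟨σ.symm ⟨x, by omega⟩, by simp⟩
    · rw [List.nodup_ofFn]
      exact Fin.val_injective.comp σ.injective
  · intro σ _ τ _ h
    have := List.ofFn_injective h
    ext i
    exact congrFun this i
  · intro l hl
    obtain ⟨hp, hav⟩ := mem_arrangements.1 hl
    have hlen : l.length = n := length_of_mem_arrangements hl
    have hlt : ∀ x ∈ l, x < n := fun x hx => by simpa using mem_of_mem_arrangements hl hx
    have hnd : l.Nodup := hp.nodup_iff.2 List.nodup_range'
    let f : Fin n → Fin n := fun i => ⟨l.get (Fin.cast hlen.symm i), hlt _ (List.get_mem _ _)⟩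
    have hf : Function.Injective f := by
      intro i j hij
      have := hnd.injective_get (congrArg Fin.val hij)
      simpa using this
    have hofn : (List.ofFn fun i => (Equiv.ofBijective f (Finite.injective_iff_bijective.1 hf) i : ℕ))
        = l := by
      subst hlen
      simp [f]
    refine ⟨Equiv.ofBijective f (Finite.injective_iff_bijective.1 hf), ?_, hofn⟩
    rw [Finset.mem_filter]
    refine ⟨Finset.mem_univ _, (avoidsH_ofFn_iff _).1 ?_⟩
    rw [hofn]
    exact hav

/-- The coefficients of `C(x / (1 - x))`, where `C` is the generating function of the Catalan
numbers. -/
def mixCount (n : ℕ) : ℕ :=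
  ∑ q ∈ Finset.HasAntidiagonal.antidiagonal n, catalan q.1 * mixNum q.1 q.2

theorem card_arrangements_avoidsH_eq_hCount (lo n : ℕ) :
    (arrangements List.AvoidsH lo n).card = hCount n := by
  rw [hCount_eq_card_arrangements]
  induction n using Nat.strong_induction_on generalizing lo with
  | _ n ih =>
  rcases n with _ | n
  · rw [arrangements_zero, arrangements_zero] <;>
    · intro x p q r h
      simp at h
  · rw [card_arrangements_avoidsH_succ, card_arrangements_avoidsH_succ]
    refine Finset.sum_congr rfl fun p hp => Finset.sum_congr rfl fun q _ => ?_
    rw [Finset.HasAntidiagonal.mem_antidiagonal] at hp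
    rw [ih p.1 (by omega) (lo + q.1 + 1), ih p.1 (by omega) (0 + q.1 + 1)]

theorem hCount_zero : hCount 0 = 1 := by
  rw [hCount_eq_card_arrangements, arrangements_zero]
  · simp
  · intro x p q r h
    simp at h

theorem hCount_succ (n : ℕ) : hCount (n + 1) =
    ∑ p ∈ Finset.HasAntidiagonal.antidiagonal n, hCount p.1 * mixCount p.2 := by
  rw [hCount_eq_card_arrangements, card_arrangements_avoidsH_succ]
  refine Finset.sum_congr rfl fun p _ => ?_
  rw [mixCount, Finset.mul_sum]
  simp only [card_arrangements_avoidsH_eq_hCount]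

theorem mixCount_succ (n : ℕ) :
    mixCount (n + 1) = ∑ k ∈ Finset.range (n + 1), n.choose k * catalan (k + 1) := by
  rw [mixCount, Finset.Nat.antidiagonal_succ, Finset.sum_cons, Finset.sum_map]
  simp only [mixNum, Function.Embedding.prodMap, Function.Embedding.coeFn_mk, mul_zero, zero_add]
  rw [Finset.Nat.sum_antidiagonal_eq_sum_range_succ_mk]
  refine Finset.sum_congr rfl fun k hk => ?_
  rw [Finset.mem_range] at hk
  simp [Nat.add_sub_cancel' (Nat.le_of_lt_succ hk), mul_comm]

theorem one_sub_X_mul_mk_mixCount :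
    (1 - X) * (PowerSeries.mk fun n => (mixCount n : ℝ)) =
      (1 - X) + X * (PowerSeries.mk fun n => (mixCount n : ℝ)) ^ 2 := by
  set u : PowerSeries ℝ := PowerSeries.mk 1 with hu
  have hu1 : u * (1 - X) = 1 := mk_one_mul_one_sub_eq_one ℝ
  have hpow : ∀ k t, coeff t (u ^ k) = mixNum k t := by
    intro k t
    rcases k with _ | k
    · cases t <;> simp [mixNum, coeff_one]
    · rw [hu, mk_one_pow_eq_mk_choose_add, coeff_mk, mixNum]
  have hy : HasSubst (X * u) := HasSubst.of_constantCoeff_zero' (by simp)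
  set c : PowerSeries ℝ := catalanSeries.map (Nat.castRingHom ℝ) with hc
  have hcat : c = c ^ 2 * X + 1 := by
    have := congrArg (PowerSeries.map (Nat.castRingHom ℝ)) catalanSeries_sq_mul_X_add_one
    simpa using this.symm
  have hD : (PowerSeries.mk fun n => (mixCount n : ℝ)) = c.subst (X * u) := by
    ext n
    rw [coeff_subst' hy, coeff_mk, mixCount, Finset.Nat.sum_antidiagonal_eq_sum_range_succ_mk,
      finsum_eq_sum_of_support_subset (s := Finset.range (n + 1))]
    · push_cast
      refine Finset.sum_congr rfl fun k hk => ?_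
      rw [Finset.mem_range, Nat.lt_succ_iff] at hk
      rw [mul_pow, coeff_X_pow_mul', if_pos hk, hpow]
      simp [hc]
    · intro k hk
      by_contra hkn
      simp only [Finset.coe_range, Set.mem_Iio, Nat.lt_succ_iff] at hkn
      rw [Function.mem_support, mul_pow, coeff_X_pow_mul', if_neg hkn] at hk
      simp at hk
  have hq : c.subst (X * u) = c.subst (X * u) ^ 2 * (X * u) + 1 := by
    conv_lhs => rw [hcat]
    rw [← coe_substAlgHom hy, map_add, map_mul, map_pow, map_one, substAlgHom_X]
  rw [hD]
  set D := c.subst (X * u)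
  linear_combination (1 - X) * hq + (D ^ 2 * X) * hu1

theorem two_mul_hCount_succ (n : ℕ) : 2 * hCount (n + 1) = hCount n + mixCount (n + 1) := by
  set D : PowerSeries ℝ := PowerSeries.mk fun n => (mixCount n : ℝ) with hD
  set H : PowerSeries ℝ := PowerSeries.mk fun n => (hCount n : ℝ) with hH
  have h1 : H = 1 + X * (H * D) := by
    ext m
    rcases m with _ | m
    · simp [hH, hCount_zero]
    · rw [map_add, coeff_succ_X_mul]
      simp [hH, hD, hCount_succ, coeff_mul, coeff_one]
  have h2 : (1 - X) * D = (1 - X) + X * D ^ 2 := one_sub_X_mul_mk_mixCount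
  have h3 : (2 - X) * H = 1 + D := by
    linear_combination (1 + D) * h1 - H * h2
  have h4 := congrArg (coeff (n + 1)) h3
  have h5 : (coeff (n + 1)) ((2 - X) * H) = 2 * (hCount (n + 1) : ℝ) - hCount n := by
    rw [sub_mul, map_sub, coeff_succ_X_mul, two_mul, map_add]
    simp [hH]
    ring
  rw [h5] at h4
  simp [hD, coeff_one] at h4
  have : (2 * hCount (n + 1) : ℝ) = hCount n + mixCount (n + 1) := by linarith
  exact_mod_cast this

lemma integral_cos_pow_even_zero_pi_div_two (k : ℕ) :
    ∫ x in (0 : ℝ)..Real.pi / 2, Real.cos x ^ (2 * k) =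
      Real.pi / 2 * (k.centralBinom / 4 ^ k) := by
  induction k with
  | zero => simp
  | succ k ih =>
    rw [Nat.mul_add_one, integral_cos_pow, ih]
    have h : ((k : ℝ) + 1) * (k + 1).centralBinom = 2 * (2 * k + 1) * k.centralBinom := by
      exact_mod_cast Nat.succ_mul_centralBinom_succ k
    have hk : (k : ℝ) + 1 ≠ 0 := by positivity
    have h' : ((k + 1).centralBinom : ℝ) = 2 * (2 * k + 1) * k.centralBinom / (k + 1) := by
      rw [eq_div_iff hk, ← h, mul_comm]
    rw [h']
    simp only [Real.cos_pi_div_two, Real.sin_zero, mul_zero, sub_zero, ne_eq, Nat.add_eq_zero_iff,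
      one_ne_zero, and_false, not_false_eq_true, zero_pow, zero_mul, zero_div, zero_add]
    push_cast
    rw [pow_succ]
    field_simp
    ring

lemma catalan_eq_integral (k : ℕ) :
    (catalan k : ℝ) = 4 / Real.pi * ∫ x in (0 : ℝ)..Real.pi / 2,
      (4 * Real.cos x ^ 2) ^ k * Real.sin x ^ 2 := by
  have e : ∀ x : ℝ, (4 * Real.cos x ^ 2) ^ k * Real.sin x ^ 2 =
      4 ^ k * (Real.cos x ^ (2 * k) - Real.cos x ^ (2 * (k + 1))) := by
    intro x
    rw [Real.sin_sq, mul_pow, ← pow_mul]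
    ring
  simp_rw [e]
  rw [intervalIntegral.integral_const_mul, intervalIntegral.integral_sub
    (Continuous.intervalIntegrable (by fun_prop) _ _)
    (Continuous.intervalIntegrable (by fun_prop) _ _),
    integral_cos_pow_even_zero_pi_div_two, integral_cos_pow_even_zero_pi_div_two]
  have h : ((k : ℝ) + 1) * (k + 1).centralBinom = 2 * (2 * k + 1) * k.centralBinom := by
    exact_mod_cast Nat.succ_mul_centralBinom_succ k
  have h2 : ((k : ℝ) + 1) * catalan k = k.centralBinom := by
    exact_mod_cast succ_mul_catalan_eq_centralBinom k
  have hk : (k : ℝ) + 1 ≠ 0 := by positivity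
  have h' : ((k + 1).centralBinom : ℝ) = 2 * (2 * k + 1) * catalan k := by
    apply mul_left_cancel₀ hk
    rw [h, ← h2]; ring
  rw [h', ← h2, pow_succ]
  have := Real.pi_ne_zero
  field_simp
  ring

lemma mixCount_succ_eq_integral (n : ℕ) :
    (mixCount (n + 1) : ℝ) = 4 / Real.pi * ∫ x in (0 : ℝ)..Real.pi / 2,
      4 * Real.cos x ^ 2 * (5 - 4 * Real.sin x ^ 2) ^ n * Real.sin x ^ 2 := by
  rw [mixCount_succ]
  push_cast
  simp_rw [catalan_eq_integral, mul_left_comm _ (4 / Real.pi)]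
  rw [← Finset.mul_sum]
  congr 1
  simp_rw [← intervalIntegral.integral_const_mul]
  rw [← intervalIntegral.integral_finsetSum
    (fun i _ => Continuous.intervalIntegrable (by fun_prop) _ _)]
  congr 1
  ext x
  rw [show 5 - 4 * Real.sin x ^ 2 = 4 * Real.cos x ^ 2 + 1 by rw [Real.sin_sq]; ring, add_pow,
    Finset.mul_sum, Finset.sum_mul]
  refine Finset.sum_congr rfl fun k _ => ?_
  rw [pow_succ, one_pow]
  ring

/-- The integrand of `mixCount_succ_eq_integral` after rescaling by `√n`. -/
noncomputable def rescaledIntegrand (n : ℕ) (s : ℝ) : ℝ :=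
  4 * Real.cos (s / √n) ^ 2 * (1 + -(4 / 5 * Real.sin (s / √n) ^ 2)) ^ n *
    (n * Real.sin (s / √n) ^ 2)

lemma mixCount_succ_eq_rescaled {n : ℕ} (hn : n ≠ 0) :
    (mixCount (n + 1) : ℝ) * (n * √n) / 5 ^ n = 4 / Real.pi * ∫ s in Set.Ioi (0 : ℝ),
      (Set.Iic (√n * (Real.pi / 2))).indicator (rescaledIntegrand n) s := by
  have hs : √(n : ℝ) ≠ 0 := by positivity
  rw [MeasureTheory.setIntegral_indicator measurableSet_Iic, Set.Ioi_inter_Iic,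
    ← intervalIntegral.integral_of_le (by positivity)]
  have h := intervalIntegral.integral_comp_div (a := 0) (b := √n * (Real.pi / 2))
    (fun x => 4 * Real.cos x ^ 2 * (1 + -(4 / 5 * Real.sin x ^ 2)) ^ n *
      (n * Real.sin x ^ 2)) hs
  rw [zero_div, mul_div_cancel_left₀ _ hs] at h
  unfold rescaledIntegrand
  rw [h, mixCount_succ_eq_integral]
  have e : ∀ x : ℝ, 4 * Real.cos x ^ 2 * (1 + -(4 / 5 * Real.sin x ^ 2)) ^ n *
      (n * Real.sin x ^ 2) = (n / 5 ^ n) *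
      (4 * Real.cos x ^ 2 * (5 - 4 * Real.sin x ^ 2) ^ n * Real.sin x ^ 2) := by
    intro x
    rw [show (1 + -(4 / 5 * Real.sin x ^ 2)) = (5 - 4 * Real.sin x ^ 2) / 5 by ring, div_pow]
    ring
  simp_rw [e]
  rw [intervalIntegral.integral_const_mul, smul_eq_mul]
  ring

lemma tendsto_rescaledIntegrand (s : ℝ) (hs : 0 < s) :
    Tendsto (fun n : ℕ => rescaledIntegrand n s) atTop
      (𝓝 (4 * (s ^ (2 : ℝ) * Real.exp (-(4 / 5) * s ^ (2 : ℝ))))) := by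
  have hsqrt : Tendsto (fun n : ℕ => √(n : ℝ)) atTop atTop :=
    Real.tendsto_sqrt_atTop.comp tendsto_natCast_atTop_atTop
  have h0 : Tendsto (fun n : ℕ => s / √n) atTop (𝓝 0) := hsqrt.const_div_atTop s
  have hsinc : Tendsto (fun n : ℕ => Real.sinc (s / √n)) atTop (𝓝 1) := by
    have := (Real.continuous_sinc.tendsto 0).comp h0
    rwa [Real.sinc_zero] at this
  have hsin : Tendsto (fun n : ℕ => (n : ℝ) * Real.sin (s / √n) ^ 2) atTop (𝓝 (s ^ 2)) := by
    have h1 : Tendsto (fun n : ℕ => s ^ 2 * Real.sinc (s / √n) ^ 2) atTop (𝓝 (s ^ 2 * 1 ^ 2)) :=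
      (hsinc.pow 2).const_mul _
    rw [one_pow, mul_one] at h1
    refine h1.congr' ?_
    filter_upwards [eventually_gt_atTop 0] with n hn
    have hn' : (0 : ℝ) < √n := by positivity
    rw [Real.sinc_of_ne_zero (by positivity), div_pow, div_pow, Real.sq_sqrt (by positivity)]
    field_simp
  have hcos : Tendsto (fun n : ℕ => 4 * Real.cos (s / √n) ^ 2) atTop (𝓝 (4 * 1 ^ 2)) := by
    have := (Real.continuous_cos.tendsto 0).comp h0
    rw [Real.cos_zero] at this
    exact (this.pow 2).const_mul 4
  have hexp : Tendsto (fun n : ℕ => (1 + -(4 / 5 * Real.sin (s / √n) ^ 2)) ^ n) atTop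
      (𝓝 (Real.exp (-(4 / 5) * s ^ 2))) := by
    apply Real.tendsto_one_add_pow_exp_of_tendsto
    refine (hsin.const_mul (-(4 / 5))).congr fun n => ?_
    ring
  have := (hcos.mul hexp).mul hsin
  rw [Real.rpow_two, show 4 * (s ^ 2 * Real.exp (-(4 / 5) * s ^ 2)) =
    4 * 1 ^ 2 * Real.exp (-(4 / 5) * s ^ 2) * s ^ 2 by ring]
  exact this

lemma abs_rescaledIntegrand_le {n : ℕ} {s : ℝ} (hs : 0 < s) (hsn : s ≤ √n * (Real.pi / 2)) :
    |rescaledIntegrand n s| ≤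
      4 * (s ^ (2 : ℝ) * Real.exp (-(16 / (5 * Real.pi ^ 2)) * s ^ (2 : ℝ))) := by
  have hpi := Real.pi_pos
  have hn : (0 : ℝ) < √n := by
    by_contra h
    have : √(n : ℝ) = 0 := le_antisymm (not_lt.1 h) (Real.sqrt_nonneg _)
    rw [this] at hsn
    linarith
  have hx0 : 0 ≤ s / √n := by positivity
  have hx1 : s / √n ≤ Real.pi / 2 := by rw [div_le_iff₀ hn]; linarith
  have hnsq : (n : ℝ) * (s / √n) ^ 2 = s ^ 2 := by
    rw [div_pow, Real.sq_sqrt (by positivity)]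
    have : (n : ℝ) ≠ 0 := by rintro h; simp [h] at hn
    field_simp
  have h1 := Real.mul_le_sin hx0 hx1
  have h2 := Real.sin_le hx0
  set x := s / √n
  have h3 : 0 ≤ 2 / Real.pi * x := by positivity
  have hsin0 : 0 ≤ Real.sin x := h3.trans h1
  have hA : 0 ≤ 1 + -(4 / 5 * Real.sin x ^ 2) := by nlinarith [Real.sin_sq_le_one x]
  have hsinle : (n : ℝ) * Real.sin x ^ 2 ≤ s ^ 2 := by
    rw [← hnsq]; gcongr
  have hlow : 4 / Real.pi ^ 2 * s ^ 2 ≤ n * Real.sin x ^ 2 := by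
    rw [← hnsq]
    calc 4 / Real.pi ^ 2 * (n * x ^ 2) = n * (2 / Real.pi * x) ^ 2 := by ring
      _ ≤ _ := by gcongr
  have hpow : (1 + -(4 / 5 * Real.sin x ^ 2)) ^ n ≤
      Real.exp (-(16 / (5 * Real.pi ^ 2)) * s ^ 2) := by
    calc (1 + -(4 / 5 * Real.sin x ^ 2)) ^ n ≤ (Real.exp (-(4 / 5 * Real.sin x ^ 2))) ^ n := by
          gcongr
          rw [add_comm]
          exact Real.add_one_le_exp _
      _ = Real.exp (n * -(4 / 5 * Real.sin x ^ 2)) := (Real.exp_nat_mul _ _).symm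
      _ ≤ _ := by
        apply Real.exp_le_exp.2
        have : 16 / (5 * Real.pi ^ 2) * s ^ 2 = 4 / 5 * (4 / Real.pi ^ 2 * s ^ 2) := by
          field_simp; norm_num
        linarith
  have hcos : 4 * Real.cos x ^ 2 ≤ 4 := by nlinarith [Real.cos_sq_le_one x]
  rw [Real.rpow_two, rescaledIntegrand, abs_of_nonneg (by positivity)]
  calc 4 * Real.cos x ^ 2 * (1 + -(4 / 5 * Real.sin x ^ 2)) ^ n * (n * Real.sin x ^ 2)
      ≤ 4 * Real.exp (-(16 / (5 * Real.pi ^ 2)) * s ^ 2) * s ^ 2 := by gcongr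
    _ = _ := by ring

theorem tendsto_integral_rescaledIntegrand :
    Tendsto (fun n : ℕ => ∫ s in Set.Ioi (0 : ℝ),
      (Set.Iic (√n * (Real.pi / 2))).indicator (rescaledIntegrand n) s) atTop
      (𝓝 (∫ s in Set.Ioi (0 : ℝ), 4 * (s ^ (2 : ℝ) * Real.exp (-(4 / 5) * s ^ (2 : ℝ))))) := by
  refine MeasureTheory.tendsto_integral_of_dominated_convergence
    (fun s => 4 * (s ^ (2 : ℝ) * Real.exp (-(16 / (5 * Real.pi ^ 2)) * s ^ (2 : ℝ)))) ?_ ?_ ?_ ?_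
  · intro n
    refine MeasureTheory.AEStronglyMeasurable.indicator ?_ measurableSet_Iic
    refine Continuous.aestronglyMeasurable ?_
    unfold rescaledIntegrand
    fun_prop
  · exact (integrableOn_rpow_mul_exp_neg_mul_rpow (by norm_num) (by norm_num)
      (by have := Real.pi_pos; positivity)).const_mul 4
  · intro n
    refine MeasureTheory.ae_restrict_of_forall_mem measurableSet_Ioi fun s hs => ?_
    have hs : 0 < s := hs
    by_cases h : s ∈ Set.Iic (√n * (Real.pi / 2))
    · rw [Set.indicator_of_mem h]
      exact abs_rescaledIntegrand_le hs h
    · rw [Set.indicator_of_notMem h, norm_zero]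
      positivity
  · refine MeasureTheory.ae_restrict_of_forall_mem measurableSet_Ioi fun s hs => ?_
    refine (tendsto_rescaledIntegrand s hs).congr' ?_
    have hsqrt : Tendsto (fun n : ℕ => √(n : ℝ) * (Real.pi / 2)) atTop atTop :=
      (Real.tendsto_sqrt_atTop.comp tendsto_natCast_atTop_atTop).atTop_mul_const
        (by have := Real.pi_pos; positivity)
    filter_upwards [hsqrt.eventually_ge_atTop s] with n hn
    rw [Set.indicator_of_mem (by exact hn)]

lemma integral_rescaled_limit :
    4 / Real.pi * ∫ s in Set.Ioi (0 : ℝ), 4 * (s ^ (2 : ℝ) * Real.exp (-(4 / 5) * s ^ (2 : ℝ))) =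
      5 / 2 * √(5 / Real.pi) := by
  rw [MeasureTheory.integral_const_mul, integral_rpow_mul_exp_neg_mul_rpow (by norm_num)
    (by norm_num) (by norm_num)]
  have hG : Real.Gamma ((2 + 1) / 2) = √Real.pi / 2 := by
    rw [show ((2 : ℝ) + 1) / 2 = 1 / 2 + 1 by norm_num, Real.Gamma_add_one (by norm_num),
      Real.Gamma_one_half_eq]
    ring
  have hr : (4 / 5 : ℝ) ^ (-((2 : ℝ) + 1) / 2) = 5 * √5 / 8 := by
    rw [show (-((2 : ℝ) + 1) / 2) = -(1 + 1 / 2) by norm_num, Real.rpow_neg (by norm_num),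
      Real.rpow_add (by norm_num), Real.rpow_one, ← Real.sqrt_eq_rpow,
      Real.sqrt_div (by norm_num), show (4 : ℝ) = 2 ^ 2 by norm_num,
      Real.sqrt_sq (by norm_num)]
    field_simp
    norm_num
  rw [hG, hr, Real.sqrt_div (by norm_num)]
  have hpi : √Real.pi ≠ 0 := by have := Real.pi_pos; positivity
  have hpi' : Real.pi = √Real.pi * √Real.pi := (Real.mul_self_sqrt Real.pi_pos.le).symm
  rw [show 4 / Real.pi = 4 / (√Real.pi * √Real.pi) by rw [← hpi']]
  field_simp
  norm_num

theorem tendsto_mixCount_succ :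
    Tendsto (fun n : ℕ => (mixCount (n + 1) : ℝ) * (n * √n) / 5 ^ n) atTop
      (𝓝 (5 / 2 * √(5 / Real.pi))) := by
  rw [← integral_rescaled_limit]
  refine (tendsto_integral_rescaledIntegrand.const_mul _).congr' ?_
  filter_upwards [eventually_ne_atTop 0] with n hn
  exact (mixCount_succ_eq_rescaled hn).symm

lemma tendsto_zero_of_le_half_mul_add {z g : ℕ → ℝ} (hz : ∀ n, 0 ≤ z n)
    (h : ∀ᶠ n in atTop, z (n + 1) ≤ z n / 2 + g n) (hg : Tendsto g atTop (𝓝 0)) :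
    Tendsto z atTop (𝓝 0) := by
  rw [Metric.tendsto_atTop]
  intro ε hε
  obtain ⟨N, hN⟩ := eventually_atTop.1 (h.and (hg.eventually_lt_const (show 0 < ε / 4 by positivity)))
  have hb : ∀ k, z (N + k) ≤ z N * (1 / 2) ^ k + ε / 2 := by
    intro k
    induction k with
    | zero => simp; positivity
    | succ k ih =>
      have := hN (N + k) (by omega)
      rw [← add_assoc, pow_succ]
      linarith
  have hlim : Tendsto (fun k : ℕ => z N * (1 / 2 : ℝ) ^ k) atTop (𝓝 (z N * 0)) :=
    (tendsto_pow_atTop_nhds_zero_of_lt_one (by norm_num) (by norm_num)).const_mul _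
  rw [mul_zero] at hlim
  obtain ⟨K, hK⟩ := eventually_atTop.1 (hlim.eventually_lt_const (show 0 < ε / 2 by positivity))
  refine ⟨N + K, fun n hn => ?_⟩
  obtain ⟨k, rfl⟩ := Nat.exists_eq_add_of_le (show N ≤ n by omega)
  rw [Real.dist_0_eq_abs, abs_of_nonneg (hz _)]
  have := hb k
  have := hK k (by omega)
  linarith

lemma tendsto_of_eventually_eq_mul_add {x r f : ℕ → ℝ} {ρ φ L : ℝ}
    (h : ∀ᶠ n in atTop, x (n + 1) = r n * x n + f n) (hr : Tendsto r atTop (𝓝 ρ))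
    (hf : Tendsto f atTop (𝓝 φ)) (hρ : |ρ| < 1 / 2) (hL : L = ρ * L + φ) :
    Tendsto x atTop (𝓝 L) := by
  rw [tendsto_iff_norm_sub_tendsto_zero]
  have hg : Tendsto (fun n => |r n * L + f n - L|) atTop (𝓝 0) := by
    have := (((hr.mul_const L).add hf).sub_const L).abs
    rwa [← hL, sub_self, abs_zero] at this
  refine tendsto_zero_of_le_half_mul_add (fun n => norm_nonneg _) ?_ hg
  filter_upwards [h, hr.abs.eventually_lt_const hρ] with n hn hrn
  rw [Real.norm_eq_abs, Real.norm_eq_abs, hn,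
    show r n * x n + f n - L = r n * (x n - L) + (r n * L + f n - L) by ring]
  refine (abs_add_le _ _).trans ?_
  rw [abs_mul]
  have := mul_le_mul_of_nonneg_right hrn.le (abs_nonneg (x n - L))
  linarith

theorem hCount_asymptotics :
    Tendsto (fun n : ℕ => (hCount n : ℝ) * (n : ℝ) ^ ((3 : ℝ) / 2) / 5 ^ n)
      atTop (nhds ((5 / 18) * Real.sqrt (5 / Real.pi))) := by
  have hpow : ∀ n : ℕ, (n : ℝ) ^ ((3 : ℝ) / 2) = n * √n := by
    intro n
    rw [show (3 : ℝ) / 2 = 1 + 1 / 2 by norm_num, Real.rpow_add_of_nonneg (by positivity)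
      (by norm_num) (by norm_num), Real.rpow_one, Real.sqrt_eq_rpow]
  simp_rw [hpow]
  have hq : Tendsto (fun n : ℕ => ((n : ℝ) + 1) / n) atTop (𝓝 1) := by
    have h1 : Tendsto (fun n : ℕ => 1 + 1 / (n : ℝ)) atTop (𝓝 (1 + 0)) :=
      tendsto_one_div_atTop_nhds_zero_nat.const_add 1
    rw [add_zero] at h1
    refine h1.congr' ?_
    filter_upwards [eventually_ne_atTop 0] with n hn
    have : (n : ℝ) ≠ 0 := by exact_mod_cast hn
    field_simp
  have hr : Tendsto (fun n : ℕ => ((n : ℝ) + 1) / n * √(((n : ℝ) + 1) / n)) atTop (𝓝 1) := by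
    have := hq.mul hq.sqrt
    simpa using this
  refine tendsto_of_eventually_eq_mul_add (ρ := 1 / 10 * 1)
    (φ := 1 / 10 * (1 * (5 / 2 * √(5 / Real.pi)))) ?_ (hr.const_mul (1 / 10))
    ((hr.mul tendsto_mixCount_succ).const_mul (1 / 10)) (by norm_num [abs_of_pos]) (by ring)
  filter_upwards [eventually_ne_atTop 0] with n hn
  have hn' : (0 : ℝ) < n := by positivity
  have h2 : (hCount (n + 1) : ℝ) = (hCount n + mixCount (n + 1)) / 2 := by
    rw [eq_div_iff (by norm_num), mul_comm]
    exact_mod_cast two_mul_hCount_succ n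
  have hs : √(n : ℝ) ≠ 0 := by positivity
  rw [h2, Real.sqrt_div (by positivity)]
  push_cast
  field_simp
  ring
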